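/- arXiv:1608.04112 — 2 statements merged into one kernel-verified Lean document; each statement's English description precedes it below -/
import Mathlib

section
/- Let n ∈ ℕ, let 𝔈 be a fall space of rank n, and let α ∈ ℝ with α > 0. Then 𝔈^α := {ε^α | ε ∈ 𝔈}, where ε^α denotes the pointwise power K ↦ ε(K)^α, is a fall space of rank n. -/
/-- A fall space of rank `n`: a set of bounded nonnegative functions `ℕⁿ → ℝ`
closed under addition, downward closed, and containing `K ↦ 2^(-h(K))` for some
polynomial `h` with natural coefficients. -/
def IsFallSpace (n : ℕ) (E : Set ((Fin n → ℕ) → ℝ)) : Prop :=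
  (∀ ε ∈ E, (∀ K, 0 ≤ ε K) ∧ ∃ C : ℝ, ∀ K, ε K ≤ C) ∧
  (∀ ε₁ ∈ E, ∀ ε₂ ∈ E, ε₁ + ε₂ ∈ E) ∧
  (∀ ε₁ ∈ E, ∀ ε₂ : (Fin n → ℕ) → ℝ, (∀ K, 0 ≤ ε₂ K) → (∀ K, ε₂ K ≤ ε₁ K) → ε₂ ∈ E) ∧
  (∃ h : MvPolynomial (Fin n) ℕ,
    (fun K => (2 : ℝ) ^ (-((MvPolynomial.eval K h : ℕ) : ℝ))) ∈ E)

/-!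
As `t ↦ t ^ α` is a bijection of the nonnegative reals, `f ∈ E ^ α` if and only if `0 ≤ f` and
`f ^ α⁻¹ ∈ E`, so each axiom for `E ^ α` becomes a claim about `E`. The claim for sums follows from
`(a + b) ^ p ≤ 2 ^ p * (a ^ p + b ^ p)`, because `E` is closed under multiplication by nonnegative
constants; for the exponential, `(2 ^ (-m h)) ^ α⁻¹ ≤ 2 ^ (-h)` as soon as `m` is a natural number
with `α ≤ m`.
-/

open scoped NNReal

theorem rpow_add_le_two_rpow_mul_rpow_add_rpow {a b p : ℝ} (ha : 0 ≤ a) (hb : 0 ≤ b)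
    (hp : 0 ≤ p) : (a + b) ^ p ≤ 2 ^ p * (a ^ p + b ^ p) := by
  lift a to ℝ≥0 using ha
  lift b to ℝ≥0 using hb
  have h := ENNReal.add_rpow_le_two_rpow_mul_rpow_add_rpow a b hp
  rw [← ENNReal.coe_ofNat] at h
  simp only [← ENNReal.coe_add, ← ENNReal.coe_rpow_of_nonneg _ hp, ← ENNReal.coe_mul,
    ENNReal.coe_le_coe] at h
  exact_mod_cast h

/-- The set `E ^ α` of pointwise powers of the functions in `E`, the fall space constructed by the
theorem. It is meant for sets of nonnegative functions: real powers of negative numbers take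
conventional values. -/
def pointwiseRpow {X : Type*} (E : Set (X → ℝ)) (α : ℝ) : Set (X → ℝ) :=
  {f | ∃ ε ∈ E, f = fun x => ε x ^ α}

theorem mem_pointwiseRpow_iff {X : Type*} {E : Set (X → ℝ)} {α : ℝ} {f : X → ℝ}
    (hE : ∀ ε ∈ E, 0 ≤ ε) (hα : α ≠ 0) :
    f ∈ pointwiseRpow E α ↔ 0 ≤ f ∧ (fun x => f x ^ α⁻¹) ∈ E := by
  constructor
  · rintro ⟨ε, hε, rfl⟩
    have root_eq : (fun x => (ε x ^ α) ^ α⁻¹) = ε :=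
      funext fun x => Real.rpow_rpow_inv (hE ε hε x) hα
    exact ⟨fun x => Real.rpow_nonneg (hE ε hε x) α, root_eq.symm ▸ hε⟩
  · rintro ⟨hf, hroot⟩
    exact ⟨_, hroot, funext fun x => (Real.rpow_inv_rpow (hf x) hα).symm⟩

namespace IsFallSpace

variable {n : ℕ} {E : Set ((Fin n → ℕ) → ℝ)} {α : ℝ} {ε ε₁ ε₂ f g : (Fin n → ℕ) → ℝ}

theorem nonneg (hE : IsFallSpace n E) (hε : ε ∈ E) : 0 ≤ ε :=
  (hE.1 ε hε).1

theorem exists_le (hE : IsFallSpace n E) (hε : ε ∈ E) : ∃ C : ℝ, ∀ K, ε K ≤ C :=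
  (hE.1 ε hε).2

theorem add_mem (hE : IsFallSpace n E) (h₁ : ε₁ ∈ E) (h₂ : ε₂ ∈ E) : ε₁ + ε₂ ∈ E :=
  hE.2.1 ε₁ h₁ ε₂ h₂

theorem mem_of_le (hE : IsFallSpace n E) (hε : ε ∈ E) (hg : 0 ≤ g) (hle : g ≤ ε) : g ∈ E :=
  hE.2.2.1 ε hε g hg hle

theorem exists_two_rpow_neg_mem (hE : IsFallSpace n E) :
    ∃ h : MvPolynomial (Fin n) ℕ,
      (fun K => (2 : ℝ) ^ (-((MvPolynomial.eval K h : ℕ) : ℝ))) ∈ E :=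
  hE.2.2.2

theorem nsmul_mem (hE : IsFallSpace n E) (hε : ε ∈ E) (m : ℕ) : m • ε ∈ E := by
  induction m with
  | zero => exact hE.mem_of_le hε (zero_nsmul ε).ge ((zero_nsmul ε).trans_le (hE.nonneg hε))
  | succ m ih => exact succ_nsmul ε m ▸ hE.add_mem ih hε

theorem mem_of_le_const_mul (hE : IsFallSpace n E) (hε : ε ∈ E) (hg : 0 ≤ g) (c : ℝ)
    (hle : ∀ K, g K ≤ c * ε K) : g ∈ E := by
  obtain ⟨m, hm⟩ := exists_nat_ge c
  refine hE.mem_of_le (hE.nsmul_mem hε m) hg fun K => ?_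
  calc
    g K ≤ c * ε K := hle K
    _ ≤ m * ε K := mul_le_mul_of_nonneg_right hm (hE.nonneg hε K)
    _ = (m • ε) K := by rw [Pi.smul_apply, nsmul_eq_mul]

theorem mem_pointwiseRpow_iff (hE : IsFallSpace n E) (hα : α ≠ 0) :
    f ∈ pointwiseRpow E α ↔ 0 ≤ f ∧ (fun K => f K ^ α⁻¹) ∈ E :=
  _root_.mem_pointwiseRpow_iff (fun _ => hE.nonneg) hα

theorem exists_le_of_mem_pointwiseRpow (hE : IsFallSpace n E) (hα : 0 ≤ α)
    (hf : f ∈ pointwiseRpow E α) : ∃ C : ℝ, ∀ K, f K ≤ C := by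
  obtain ⟨ε, hε, rfl⟩ := hf
  obtain ⟨C, hC⟩ := hE.exists_le hε
  exact ⟨C ^ α, fun K => Real.rpow_le_rpow (hE.nonneg hε K) (hC K) hα⟩

theorem add_mem_pointwiseRpow (hE : IsFallSpace n E) (hα : 0 < α)
    (hf : f ∈ pointwiseRpow E α) (hg : g ∈ pointwiseRpow E α) : f + g ∈ pointwiseRpow E α := by
  rw [hE.mem_pointwiseRpow_iff hα.ne'] at hf hg ⊢
  obtain ⟨hf₀, hf_root⟩ := hf
  obtain ⟨hg₀, hg_root⟩ := hg
  have hfg₀ : 0 ≤ f + g := add_nonneg hf₀ hg₀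
  exact ⟨hfg₀, hE.mem_of_le_const_mul (hE.add_mem hf_root hg_root)
    (fun K => Real.rpow_nonneg (hfg₀ K) α⁻¹) (2 ^ α⁻¹) fun K =>
      rpow_add_le_two_rpow_mul_rpow_add_rpow (hf₀ K) (hg₀ K) (inv_nonneg.2 hα.le)⟩

theorem mem_pointwiseRpow_of_le (hE : IsFallSpace n E) (hα : 0 < α)
    (hf : f ∈ pointwiseRpow E α) (hg : 0 ≤ g) (hle : g ≤ f) : g ∈ pointwiseRpow E α := by
  rw [hE.mem_pointwiseRpow_iff hα.ne'] at hf ⊢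
  exact ⟨hg, hE.mem_of_le hf.2 (fun K => Real.rpow_nonneg (hg K) α⁻¹)
    fun K => Real.rpow_le_rpow (hg K) (hle K) (inv_nonneg.2 hα.le)⟩

theorem exists_two_rpow_neg_mem_pointwiseRpow (hE : IsFallSpace n E) (hα : 0 < α) :
    ∃ h : MvPolynomial (Fin n) ℕ,
      (fun K => (2 : ℝ) ^ (-((MvPolynomial.eval K h : ℕ) : ℝ))) ∈ pointwiseRpow E α := by
  obtain ⟨h, hh⟩ := hE.exists_two_rpow_neg_mem
  obtain ⟨m, hm⟩ := exists_nat_ge α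
  have two_rpow_nonneg (t : ℝ) : (0 : ℝ) ≤ 2 ^ t := Real.rpow_nonneg zero_le_two t
  refine ⟨m • h, (hE.mem_pointwiseRpow_iff hα.ne').2 ⟨fun K => two_rpow_nonneg _,
    hE.mem_of_le hh (fun K => Real.rpow_nonneg (two_rpow_nonneg _) α⁻¹) fun K => ?_⟩⟩
  have exponent_le : -((MvPolynomial.eval K (m • h) : ℕ) : ℝ) ≤
      -((MvPolynomial.eval K h : ℕ) : ℝ) * α := by
    rw [map_nsmul, nsmul_eq_mul, Nat.cast_mul, Nat.cast_id, neg_mul, mul_comm, neg_le_neg_iff]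
    exact mul_le_mul_of_nonneg_left hm (Nat.cast_nonneg _)
  rw [Real.rpow_inv_le_iff_of_pos (two_rpow_nonneg _) (two_rpow_nonneg _) hα,
    ← Real.rpow_mul zero_le_two]
  exact Real.rpow_le_rpow_of_exponent_le one_le_two exponent_le

end IsFallSpace

/-- If `E` is a fall space of rank `n` and `α > 0`, then the set of pointwise
powers `E^α = {ε^α | ε ∈ E}` is also a fall space of rank `n`. -/
theorem stmt1 (n : ℕ) (E : Set ((Fin n → ℕ) → ℝ)) (hE : IsFallSpace n E)
    (α : ℝ) (hα : 0 < α) :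
    IsFallSpace n {f | ∃ ε ∈ E, f = fun K => ε K ^ α} := by
  refine ⟨fun f hf => ?bounded, fun f hf g hg => ?add, fun f hf g hg hle => ?downward,
    ?exponential⟩
  case bounded =>
    exact ⟨((hE.mem_pointwiseRpow_iff hα.ne').1 hf).1, hE.exists_le_of_mem_pointwiseRpow hα.le hf⟩
  case add => exact hE.add_mem_pointwiseRpow hα hf hg
  case downward => exact hE.mem_pointwiseRpow_of_le hα hf hg hle
  case exponential => exact hE.exists_two_rpow_neg_mem_pointwiseRpow hα
end

section
/- Let n ≥ 1 and let q be a polynomial in n−1 variables with natural-number coefficients satisfying q(J) ≥ 2 for all J ∈ ℕ^(n−1). Then there exists a family {ω_q^(J,k)}_{(J,k)∈ℕ^(n−1)×ℕ} of probability distributions on ℕ such that: for every bounded ζ : ℕ^(n−1) × ℕ → ℝ satisfying ζ(J,k') ≤ ζ(J,k) whenever k' ≥ (k+2)^(⌊log₂ q(J)⌋) − 2, the function (J,k) ↦ | ζ(J,k) − Σ_{i∈ℕ} ω_q^(J,k)(i) · ζ(J, (k+2)^(⌊log₂ q(J)⌋) − 2 + i) | lies in FallU. -/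
/-- The fall space `FallU` of rank `n = m + 1` (with `ℕⁿ` identified with
`ℕᵐ × ℕ`): bounded nonnegative `ε : ℕᵐ × ℕ → ℝ` such that for some `M > 0`
and some polynomial `p` in `m` variables with natural coefficients with
`p(J) ≥ 4`, all partial sums `Σ_{2 ≤ k ≤ N} ε(J,k)/(k·log₂ k)` are at most
`M·log₂ log₂ p(J)`. -/
def FallU (m : ℕ) : Set ((Fin m → ℕ) × ℕ → ℝ) :=
  {ε | (∀ x, 0 ≤ ε x) ∧ (∃ C : ℝ, ∀ x, ε x ≤ C) ∧
    ∃ M : ℝ, 0 < M ∧ ∃ p : MvPolynomial (Fin m) ℕ,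
      (∀ J, 4 ≤ MvPolynomial.eval J p) ∧
      ∀ (J : Fin m → ℕ) (N : ℕ),
        (∑ k ∈ Finset.Icc 2 N, ε (J, k) / ((k : ℝ) * Real.logb 2 (k : ℝ)))
          ≤ M * Real.logb 2 (Real.logb 2 ((MvPolynomial.eval J p : ℕ) : ℝ))}

/-!
Let `w k = log (log (k + 2))`, with increments `u k = w (k + 1) - w k`, and let
`τ k = (k + 2) ^ a - 2`. Taking two logarithms turns the `a`-th power into a translation,
`w (τ k) = log a + w k`, so the increments over the block `[τ k, τ (k + 1))` add up to `u k`, and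
giving each `j` in this block the mass `u j / u k` defines the distribution `ω k`. When the error
`z k - ∑ i, ω k i * z (τ k + i)` is multiplied by `u k` and summed over `k < N`, the blocks
concatenate to `[τ 0, τ N)` and everything cancels except the sums of `u * z` over `[0, τ 0)` and
`[N, τ N)`. Both intervals have `w`-length `log a`, so the total is at most `2 C log a` when
`|z| ≤ C`. Since `1 / (k log k)` is at most a constant times `u k`, this gives the `FallU` bound for
all exponents `a J` bounded by a power of `log (p J)` for some polynomial `p`.
-/

section BlockAverage

/-- The probability distribution on `ℕ` which represents the block `[τ k, τ (k + 1))` by the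
offsets `i` from its left end `τ k` and weighs each point of it by the increment of `w` there.
The normalization by `w (k + 1) - w k` gives total mass one when `w ∘ τ` is a translate of `w`. -/
noncomputable def blockWeight (w : ℕ → ℝ) (τ : ℕ → ℕ) (k i : ℕ) : ℝ :=
  if τ k + i < τ (k + 1) then (w (τ k + i + 1) - w (τ k + i)) / (w (k + 1) - w k) else 0

/-- The average of `z` over the block `[τ k, τ (k + 1))` with respect to `blockWeight w τ k`. -/
noncomputable def blockAverage (w : ℕ → ℝ) (τ : ℕ → ℕ) (z : ℕ → ℝ) (k : ℕ) : ℝ :=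
  ∑' i, blockWeight w τ k i * z (τ k + i)

variable {w : ℕ → ℝ} {τ : ℕ → ℕ} {c : ℝ}

lemma strictMono_of_comp_eq_add (hw : StrictMono w) (hτ : ∀ k, w (τ k) = c + w k) :
    StrictMono τ := fun i j hij ↦
  hw.lt_iff_lt.1 <| by simpa only [hτ, add_lt_add_iff_left] using hw hij

lemma blockWeight_nonneg (hw : Monotone w) (k i : ℕ) : 0 ≤ blockWeight w τ k i := by
  unfold blockWeight
  split_ifs
  · exact div_nonneg (sub_nonneg.2 (hw (Nat.le_succ _))) (sub_nonneg.2 (hw (Nat.le_succ _)))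
  · exact le_rfl

lemma hasSum_blockWeight_mul (w : ℕ → ℝ) (τ : ℕ → ℕ) (z : ℕ → ℝ) (k : ℕ) :
    HasSum (fun i ↦ blockWeight w τ k i * z (τ k + i))
      (∑ j ∈ Finset.Ico (τ k) (τ (k + 1)), (w (j + 1) - w j) / (w (k + 1) - w k) * z j) := by
  have hmem (i : ℕ) : i ∈ Finset.range (τ (k + 1) - τ k) ↔ τ k + i < τ (k + 1) := by
    rw [Finset.mem_range, lt_tsub_iff_left]
  have hsum : HasSum (fun i ↦ blockWeight w τ k i * z (τ k + i))
      (∑ i ∈ Finset.range (τ (k + 1) - τ k), blockWeight w τ k i * z (τ k + i)) :=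
    hasSum_sum_of_ne_finset_zero fun i hi ↦ by
      rw [blockWeight, if_neg (mt (hmem i).2 hi), zero_mul]
  rw [Finset.sum_Ico_eq_sum_range]
  convert hsum using 1
  refine Finset.sum_congr rfl fun i hi ↦ ?_
  rw [blockWeight, if_pos ((hmem i).1 hi)]

lemma blockAverage_eq_sum (w : ℕ → ℝ) (τ : ℕ → ℕ) (z : ℕ → ℝ) (k : ℕ) :
    blockAverage w τ z k =
      ∑ j ∈ Finset.Ico (τ k) (τ (k + 1)), (w (j + 1) - w j) / (w (k + 1) - w k) * z j :=
  (hasSum_blockWeight_mul w τ z k).tsum_eq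

lemma increment_mul_blockAverage (hw : StrictMono w) (z : ℕ → ℝ) (k : ℕ) :
    (w (k + 1) - w k) * blockAverage w τ z k =
      ∑ j ∈ Finset.Ico (τ k) (τ (k + 1)), (w (j + 1) - w j) * z j := by
  have hk : w (k + 1) - w k ≠ 0 := sub_ne_zero.2 (hw k.lt_succ_self).ne'
  rw [blockAverage_eq_sum, Finset.mul_sum]
  exact Finset.sum_congr rfl fun j _ ↦ by rw [← mul_assoc, mul_div_cancel₀ _ hk]

lemma sum_Ico_increment_div_increment (hw : StrictMono w) (hτ : ∀ k, w (τ k) = c + w k) (k : ℕ) :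
    ∑ j ∈ Finset.Ico (τ k) (τ (k + 1)), (w (j + 1) - w j) / (w (k + 1) - w k) = 1 := by
  have hτk : τ k ≤ τ (k + 1) := (strictMono_of_comp_eq_add hw hτ).monotone k.le_succ
  rw [← Finset.sum_div, Finset.sum_Ico_sub w hτk, hτ, hτ, add_sub_add_left_eq_sub,
    div_self (sub_ne_zero.2 (hw k.lt_succ_self).ne')]

lemma hasSum_blockWeight (hw : StrictMono w) (hτ : ∀ k, w (τ k) = c + w k) (k : ℕ) :
    HasSum (blockWeight w τ k) 1 := by
  simpa only [mul_one, sum_Ico_increment_div_increment hw hτ] using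
    hasSum_blockWeight_mul w τ (fun _ ↦ 1) k

lemma blockAverage_mem_of_convex (hw : StrictMono w) (hτ : ∀ k, w (τ k) = c + w k) {s : Set ℝ}
    (hs : Convex ℝ s) {z : ℕ → ℝ} {k : ℕ} (hz : ∀ j, τ k ≤ j → z j ∈ s) :
    blockAverage w τ z k ∈ s := by
  rw [blockAverage_eq_sum]
  refine hs.sum_mem (fun j _ ↦ ?_) (sum_Ico_increment_div_increment hw hτ k)
    fun j hj ↦ hz j (Finset.mem_Ico.1 hj).1
  exact div_nonneg (sub_nonneg.2 (hw j.lt_succ_self).le) (sub_nonneg.2 (hw k.lt_succ_self).le)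

lemma sum_range_sum_Ico_succ {M : Type*} [AddCommMonoid M] (hτ : Monotone τ) (f : ℕ → M) (N : ℕ) :
    ∑ k ∈ Finset.range N, ∑ j ∈ Finset.Ico (τ k) (τ (k + 1)), f j =
      ∑ j ∈ Finset.Ico (τ 0) (τ N), f j := by
  induction N with
  | zero => simp
  | succ N ih =>
    rw [Finset.sum_range_succ, ih,
      Finset.sum_Ico_consecutive f (hτ (Nat.zero_le N)) (hτ N.le_succ)]

lemma abs_sum_Ico_increment_mul_le (hw : Monotone w) {z : ℕ → ℝ} {C : ℝ} (hz : ∀ k, |z k| ≤ C)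
    {b d : ℕ} (hbd : b ≤ d) :
    |∑ j ∈ Finset.Ico b d, (w (j + 1) - w j) * z j| ≤ (w d - w b) * C := by
  rw [← Finset.sum_Ico_sub w hbd, Finset.sum_mul]
  refine (Finset.abs_sum_le_sum_abs _ _).trans (Finset.sum_le_sum fun j _ ↦ ?_)
  have hj : 0 ≤ w (j + 1) - w j := sub_nonneg.2 (hw j.le_succ)
  rw [abs_mul, abs_of_nonneg hj]
  exact mul_le_mul_of_nonneg_left (hz j) hj

lemma sum_increment_mul_sub_blockAverage_le (hw : StrictMono w) (hτ : ∀ k, w (τ k) = c + w k)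
    {z : ℕ → ℝ} {C : ℝ} (hz : ∀ k, |z k| ≤ C) (N : ℕ) :
    ∑ k ∈ Finset.range N, (w (k + 1) - w k) * (z k - blockAverage w τ z k) ≤ 2 * C * c := by
  have hτmono := strictMono_of_comp_eq_add hw hτ
  set f : ℕ → ℝ := fun j ↦ (w (j + 1) - w j) * z j
  have hboundary (k : ℕ) : |∑ j ∈ Finset.Ico k (τ k), f j| ≤ c * C := by
    simpa only [hτ, add_sub_cancel_right] using
      abs_sum_Ico_increment_mul_le hw.monotone hz hτmono.le_apply
  have hcancel : ∑ j ∈ Finset.range N, f j - ∑ j ∈ Finset.Ico (τ 0) (τ N), f j =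
      ∑ j ∈ Finset.Ico 0 (τ 0), f j - ∑ j ∈ Finset.Ico N (τ N), f j := by
    rw [Finset.range_eq_Ico, sub_eq_sub_iff_add_eq_add,
      Finset.sum_Ico_consecutive f (Nat.zero_le N) hτmono.le_apply,
      Finset.sum_Ico_consecutive f (Nat.zero_le _) (hτmono.monotone (Nat.zero_le N))]
  calc ∑ k ∈ Finset.range N, (w (k + 1) - w k) * (z k - blockAverage w τ z k)
    _ = ∑ j ∈ Finset.range N, f j - ∑ j ∈ Finset.Ico (τ 0) (τ N), f j := by
      simp only [mul_sub, increment_mul_blockAverage hw, Finset.sum_sub_distrib,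
        sum_range_sum_Ico_succ hτmono.monotone, f]
    _ = ∑ j ∈ Finset.Ico 0 (τ 0), f j - ∑ j ∈ Finset.Ico N (τ N), f j := hcancel
    _ ≤ c * C + c * C := by
      linarith [(abs_le.1 (hboundary 0)).2, (abs_le.1 (hboundary N)).1]
    _ = 2 * C * c := by ring

end BlockAverage

section LogLog

/-- The iterated logarithm `log (log (k + 2))`, the scale on which the sums in `FallU` are measured.
The shift by two, matched by `powShift`, makes it defined and strictly increasing from `k = 0`. -/
noncomputable def logLog (k : ℕ) : ℝ := Real.log (Real.log (k + 2))

/-- The `a`-th power map conjugated by the shift `k ↦ k + 2`, so that it fits `logLog`.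
For `a = 0` the truncated subtraction gives `0`. -/
def powShift (a k : ℕ) : ℕ := (k + 2) ^ a - 2

lemma strictMono_logLog : StrictMono logLog := fun i j hij ↦ by
  have hij' : (i : ℝ) < j := Nat.cast_lt.2 hij
  have hlog : 0 < Real.log ((i : ℝ) + 2) := Real.log_pos (by linarith [i.cast_nonneg (α := ℝ)])
  exact Real.log_lt_log hlog (Real.log_lt_log (by positivity) (by linarith))

lemma logLog_powShift {a : ℕ} (ha : a ≠ 0) (k : ℕ) :
    logLog (powShift a k) = Real.log a + logLog k := by
  have hle : 2 ≤ (k + 2) ^ a := (Nat.le_add_left 2 k).trans (Nat.le_self_pow ha _)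
  have hpow : ((powShift a k : ℕ) : ℝ) + 2 = ((k : ℝ) + 2) ^ a := by
    exact_mod_cast Nat.sub_add_cancel hle
  have hlog : Real.log ((k : ℝ) + 2) ≠ 0 :=
    (Real.log_pos (by linarith [k.cast_nonneg (α := ℝ)])).ne'
  rw [logLog, hpow, Real.log_pow, Real.log_mul (Nat.cast_ne_zero.2 ha) hlog, logLog]

lemma sub_div_mul_log_le_log_log_sub {x y : ℝ} (hx : 1 < x) (hy : 1 < y) :
    (y - x) / (y * Real.log y) ≤ Real.log (Real.log y) - Real.log (Real.log x) := by
  have hlogx : 0 < Real.log x := Real.log_pos hx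
  have hlogy : 0 < Real.log y := Real.log_pos hy
  have hsub : 1 - x / y ≤ Real.log y - Real.log x := by
    rw [← Real.log_div (by linarith) (by linarith), ← inv_div]
    exact Real.one_sub_inv_le_log_of_pos (by positivity)
  calc (y - x) / (y * Real.log y)
    _ = (1 - x / y) / Real.log y := by field_simp
    _ ≤ (Real.log y - Real.log x) / Real.log y := by gcongr
    _ = 1 - (Real.log y / Real.log x)⁻¹ := by field_simp
    _ ≤ Real.log (Real.log y / Real.log x) := Real.one_sub_inv_le_log_of_pos (by positivity)
    _ = Real.log (Real.log y) - Real.log (Real.log x) := Real.log_div hlogy.ne' hlogx.ne'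

lemma log_le_logb_two {x : ℝ} (hx : 1 ≤ x) : Real.log x ≤ Real.logb 2 x :=
  le_div_self (Real.log_nonneg hx) (Real.log_pos one_lt_two) (by linarith [Real.log_two_lt_d9])

lemma one_div_mul_logb_le_logLog_sub {k : ℕ} (hk : 2 ≤ k) :
    1 / ((k : ℝ) * Real.logb 2 k) ≤ 8 * (logLog (k + 1) - logLog k) := by
  have hk' : (2 : ℝ) ≤ k := by exact_mod_cast hk
  have hlogk : 0 < Real.log k := Real.log_pos (by linarith)
  have hlog : Real.log ((k : ℝ) + 3) ≤ 3 * Real.log k := by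
    have hcube : (k : ℝ) + 3 ≤ (k : ℝ) ^ 3 := by nlinarith [mul_self_nonneg ((k : ℝ) - 2)]
    simpa only [Real.log_pow, Nat.cast_ofNat] using Real.log_le_log (by linarith) hcube
  have hprod : ((k : ℝ) + 3) * Real.log (k + 3) ≤ 8 * (k * Real.log k) :=
    calc ((k : ℝ) + 3) * Real.log (k + 3)
      _ ≤ (5 / 2 * k) * (3 * Real.log k) :=
        mul_le_mul (by linarith) hlog (Real.log_nonneg (by linarith)) (by linarith)
      _ ≤ 8 * (k * Real.log k) := by linarith [mul_pos (by linarith : (0 : ℝ) < k) hlogk]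
  have hincr : 1 / (((k : ℝ) + 3) * Real.log (k + 3)) ≤ logLog (k + 1) - logLog k := by
    have hcast : ((k + 1 : ℕ) : ℝ) + 2 = k + 3 := by push_cast; ring
    have hdiff : (k : ℝ) + 3 - (k + 2) = 1 := by ring
    rw [logLog, logLog, hcast, ← hdiff]
    exact sub_div_mul_log_le_log_log_sub (by linarith) (by linarith)
  calc 1 / ((k : ℝ) * Real.logb 2 k)
    _ ≤ 1 / ((k : ℝ) * Real.log k) := by gcongr; exact log_le_logb_two (by linarith)
    _ = 8 * (1 / (8 * (k * Real.log k))) := by ring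
    _ ≤ 8 * (1 / (((k : ℝ) + 3) * Real.log (k + 3))) := by
      have : 0 < Real.log ((k : ℝ) + 3) := Real.log_pos (by linarith)
      gcongr
    _ ≤ 8 * (logLog (k + 1) - logLog k) := by gcongr

lemma sum_Icc_div_mul_logb_le {e : ℕ → ℝ} (he : ∀ k, 0 ≤ e k) (N : ℕ) :
    ∑ k ∈ Finset.Icc 2 N, e k / ((k : ℝ) * Real.logb 2 k) ≤
      8 * ∑ k ∈ Finset.range (N + 1), (logLog (k + 1) - logLog k) * e k := by
  rw [Finset.mul_sum]
  calc ∑ k ∈ Finset.Icc 2 N, e k / ((k : ℝ) * Real.logb 2 k)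
    _ ≤ ∑ k ∈ Finset.Icc 2 N, 8 * ((logLog (k + 1) - logLog k) * e k) := by
      refine Finset.sum_le_sum fun k hk ↦ ?_
      rw [div_eq_mul_one_div, mul_comm, ← mul_assoc]
      exact mul_le_mul_of_nonneg_right
        (one_div_mul_logb_le_logLog_sub (Finset.mem_Icc.1 hk).1) (he k)
    _ ≤ ∑ k ∈ Finset.range (N + 1), 8 * ((logLog (k + 1) - logLog k) * e k) := by
      refine Finset.sum_le_sum_of_subset_of_nonneg ?_ fun k _ _ ↦ ?_
      · exact fun k hk ↦ Finset.mem_range_succ_iff.2 (Finset.mem_Icc.1 hk).2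
      · have hincr := sub_nonneg.2 (strictMono_logLog.monotone k.le_succ)
        exact mul_nonneg (by norm_num) (mul_nonneg hincr (he k))

lemma one_le_logb_logb_of_four_le {x : ℝ} (hx : 4 ≤ x) : 1 ≤ Real.logb 2 (Real.logb 2 x) := by
  have hlogb : 2 ≤ Real.logb 2 x := by
    have hfour : (2 : ℝ) ^ (2 : ℝ) = 4 := by norm_num
    rwa [Real.le_logb_iff_rpow_le one_lt_two (by linarith), hfour]
  rwa [Real.le_logb_iff_rpow_le one_lt_two (by linarith), Real.rpow_one]

lemma logb_two_natCast_nonneg (n : ℕ) : 0 ≤ Real.logb 2 n :=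
  div_nonneg (Real.log_natCast_nonneg n) (Real.log_pos one_lt_two).le

lemma logb_two_natCast_le_of_le {n n' : ℕ} (h : n ≤ n') : Real.logb 2 n ≤ Real.logb 2 n' := by
  rcases n.eq_zero_or_pos with rfl | hn
  · simpa only [Nat.cast_zero, Real.logb_zero] using logb_two_natCast_nonneg n'
  · exact Real.logb_le_logb_of_le one_lt_two (Nat.cast_pos.2 hn) (Nat.cast_le.2 h)

lemma log_natCast_le_mul_logb_logb {a d n n' : ℕ} (ha₀ : a ≠ 0) (ha : a ≤ Real.logb 2 n ^ d)
    (hn : n ≤ n') : Real.log a ≤ d * Real.logb 2 (Real.logb 2 n') := by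
  have ha₁ : (1 : ℝ) ≤ a := by exact_mod_cast Nat.one_le_iff_ne_zero.2 ha₀
  calc Real.log a
    _ ≤ Real.logb 2 a := log_le_logb_two ha₁
    _ ≤ Real.logb 2 (Real.logb 2 n' ^ d) := by
      refine Real.logb_le_logb_of_le one_lt_two (by linarith) (ha.trans ?_)
      exact pow_le_pow_left₀ (logb_two_natCast_nonneg n) (logb_two_natCast_le_of_le hn) d
    _ = d * Real.logb 2 (Real.logb 2 n') := Real.logb_pow 2 _ d

lemma natFloor_logb_two_ne_zero {n : ℕ} (hn : 2 ≤ n) : ⌊Real.logb 2 (n : ℝ)⌋₊ ≠ 0 := by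
  rw [← Nat.cast_ofNat, Real.natFloor_logb_natCast]
  exact (Nat.log_pos one_lt_two hn).ne'

lemma natFloor_logb_two_le (n : ℕ) : (⌊Real.logb 2 (n : ℝ)⌋₊ : ℝ) ≤ Real.logb 2 n :=
  Nat.floor_le (logb_two_natCast_nonneg n)

end LogLog

section FallU

variable {m : ℕ} {p : MvPolynomial (Fin m) ℕ}

lemma mem_FallU_of_sum_increment_logLog_le {ε : (Fin m → ℕ) × ℕ → ℝ} {C M : ℝ}
    (hp : ∀ J, 4 ≤ MvPolynomial.eval J p) (hε₀ : ∀ x, 0 ≤ ε x) (hεC : ∀ x, ε x ≤ C)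
    (hε : ∀ J N, ∑ k ∈ Finset.range N, (logLog (k + 1) - logLog k) * ε (J, k) ≤
      M * Real.logb 2 (Real.logb 2 (MvPolynomial.eval J p : ℕ))) :
    ε ∈ FallU m := by
  refine ⟨hε₀, ⟨C, hεC⟩, 8 * max M 1, by positivity, p, hp, fun J N ↦ ?_⟩
  have hpJ : 1 ≤ Real.logb 2 (Real.logb 2 (MvPolynomial.eval J p : ℕ)) :=
    one_le_logb_logb_of_four_le (by exact_mod_cast hp J)
  calc ∑ k ∈ Finset.Icc 2 N, ε (J, k) / ((k : ℝ) * Real.logb 2 k)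
    _ ≤ 8 * ∑ k ∈ Finset.range (N + 1), (logLog (k + 1) - logLog k) * ε (J, k) :=
      sum_Icc_div_mul_logb_le (fun k ↦ hε₀ (J, k)) N
    _ ≤ 8 * (M * Real.logb 2 (Real.logb 2 (MvPolynomial.eval J p : ℕ))) := by
      gcongr; exact hε J (N + 1)
    _ ≤ 8 * (max M 1 * Real.logb 2 (Real.logb 2 (MvPolynomial.eval J p : ℕ))) := by
      gcongr; exact le_max_left M 1
    _ = 8 * max M 1 * Real.logb 2 (Real.logb 2 (MvPolynomial.eval J p : ℕ)) := by ring

lemma abs_sub_blockAverage_mem_FallU {d : ℕ} {a : (Fin m → ℕ) → ℕ} {ζ : (Fin m → ℕ) × ℕ → ℝ}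
    {C : ℝ} (ha₀ : ∀ J, a J ≠ 0)
    (ha : ∀ J, (a J : ℝ) ≤ Real.logb 2 (MvPolynomial.eval J p : ℕ) ^ d)
    (hC : ∀ x, |ζ x| ≤ C)
    (hζ : ∀ J k k', powShift (a J) k ≤ k' → ζ (J, k') ≤ ζ (J, k)) :
    (fun x ↦ |ζ x - blockAverage logLog (powShift (a x.1)) (fun k ↦ ζ (x.1, k)) x.2|) ∈
      FallU m := by
  have hC₀ : 0 ≤ C := (abs_nonneg _).trans (hC (0, 0))
  have hmem {J k} {s : Set ℝ} (hs : Convex ℝ s) (h : ∀ j, powShift (a J) k ≤ j → ζ (J, j) ∈ s) :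
      blockAverage logLog (powShift (a J)) (fun k ↦ ζ (J, k)) k ∈ s :=
    blockAverage_mem_of_convex strictMono_logLog (logLog_powShift (ha₀ J)) hs h
  have hle (J k) : blockAverage logLog (powShift (a J)) (fun k ↦ ζ (J, k)) k ≤ ζ (J, k) :=
    hmem (convex_Iic (ζ (J, k))) (hζ J k)
  have hbound (J k) : |blockAverage logLog (powShift (a J)) (fun k ↦ ζ (J, k)) k| ≤ C :=
    abs_le.2 (hmem (convex_Icc (-C) C) fun j _ ↦ abs_le.1 (hC (J, j)))
  have hp (J) : MvPolynomial.eval J (p + 4) = MvPolynomial.eval J p + 4 := by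
    rw [map_add, map_ofNat]
  refine mem_FallU_of_sum_increment_logLog_le (p := p + 4) (C := C + C) (M := 2 * C * d)
    (fun J ↦ hp J ▸ Nat.le_add_left 4 _) (fun x ↦ abs_nonneg _)
    (fun x ↦ (abs_sub _ _).trans (add_le_add (hC x) (hbound x.1 x.2))) fun J N ↦ ?_
  simp only [abs_of_nonneg (sub_nonneg.2 (hle _ _))]
  calc _ ≤ 2 * C * Real.log (a J) :=
        sum_increment_mul_sub_blockAverage_le strictMono_logLog (logLog_powShift (ha₀ J))
          (fun k ↦ hC (J, k)) N
    _ ≤ 2 * C * (d * Real.logb 2 (Real.logb 2 (MvPolynomial.eval J (p + 4) : ℕ))) := by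
      gcongr; exact log_natCast_le_mul_logb_logb (ha₀ J) (ha J) (hp J ▸ Nat.le_add_right _ 4)
    _ = _ := by ring

end FallU

theorem stmt16_general (m d : ℕ) (p : MvPolynomial (Fin m) ℕ) (a : (Fin m → ℕ) → ℕ)
    (ha₀ : ∀ J, a J ≠ 0) (ha : ∀ J, (a J : ℝ) ≤ Real.logb 2 (MvPolynomial.eval J p : ℕ) ^ d) :
    ∃ ω : (Fin m → ℕ) × ℕ → ℕ → ℝ,
      (∀ x, (∀ i, 0 ≤ ω x i ∧ ω x i ≤ 1) ∧ HasSum (ω x) 1) ∧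
      ∀ ζ : (Fin m → ℕ) × ℕ → ℝ, (∃ C : ℝ, ∀ x, |ζ x| ≤ C) →
        (∀ (J : Fin m → ℕ) (k k' : ℕ), (k + 2) ^ a J - 2 ≤ k' → ζ (J, k') ≤ ζ (J, k)) →
        (fun x : (Fin m → ℕ) × ℕ =>
          |ζ x - ∑' i : ℕ, ω x i * ζ (x.1, (x.2 + 2) ^ a x.1 - 2 + i)|) ∈ FallU m := by
  have hnonneg (x : (Fin m → ℕ) × ℕ) := blockWeight_nonneg (τ := powShift (a x.1))
    strictMono_logLog.monotone x.2
  have hsum (x : (Fin m → ℕ) × ℕ) :=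
    hasSum_blockWeight strictMono_logLog (logLog_powShift (ha₀ x.1)) x.2
  refine ⟨fun x ↦ blockWeight logLog (powShift (a x.1)) x.2, fun x ↦ ⟨fun i ↦ ?_, hsum x⟩, ?_⟩
  · exact ⟨hnonneg x i, le_hasSum (hsum x) i fun j _ ↦ hnonneg x j⟩
  · rintro ζ ⟨C, hC⟩ hζ
    exact abs_sub_blockAverage_mem_FallU ha₀ ha hC hζ

/-- For any polynomial `q` in `n−1` variables with `q(J) ≥ 2`, there is a
family of probability distributions `ω_q^(J,k)` on `ℕ` such that for every
bounded `ζ` satisfying `ζ(J,k') ≤ ζ(J,k)` whenever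
`k' ≥ (k+2)^⌊log₂ q(J)⌋ − 2`, the function
`(J,k) ↦ |ζ(J,k) − Σᵢ ω_q^(J,k)(i)·ζ(J,(k+2)^⌊log₂ q(J)⌋ − 2 + i)|`
lies in `FallU`. -/
theorem stmt16 (m : ℕ) (q : MvPolynomial (Fin m) ℕ)
    (hq : ∀ J, 2 ≤ MvPolynomial.eval J q) :
    ∃ ω : (Fin m → ℕ) × ℕ → ℕ → ℝ,
      (∀ x, (∀ i, 0 ≤ ω x i ∧ ω x i ≤ 1) ∧ HasSum (ω x) 1) ∧
      ∀ ζ : (Fin m → ℕ) × ℕ → ℝ, (∃ C : ℝ, ∀ x, |ζ x| ≤ C) →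
        (∀ (J : Fin m → ℕ) (k k' : ℕ),
          (k + 2) ^ ⌊Real.logb 2 ((MvPolynomial.eval J q : ℕ) : ℝ)⌋₊ - 2 ≤ k' →
          ζ (J, k') ≤ ζ (J, k)) →
        (fun x : (Fin m → ℕ) × ℕ =>
          |ζ x - ∑' i : ℕ, ω x i *
            ζ (x.1, (x.2 + 2) ^ ⌊Real.logb 2 ((MvPolynomial.eval x.1 q : ℕ) : ℝ)⌋₊ - 2 + i)|)
          ∈ FallU m :=
  stmt16_general m 1 q _ (fun J ↦ natFloor_logb_two_ne_zero (hq J))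
    fun _ ↦ (natFloor_logb_two_le _).trans_eq (pow_one _).symm
end
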